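/- Let n ≥ 1 and let f : ℝⁿ → ℝ be a nonnegative, continuous, compactly supported function with ∫_{ℝⁿ} f dx = 1, and let u(t,x) = ∫_{ℝⁿ} (4πt)^{-n/2} exp(-‖x-y‖²/(4t)) f(y) dy. Then lim_{t→∞} ( H(u(t)) - (n/2) log(4πe t) ) = 0; equivalently, lim_{t→∞} N(u(t))/t = 4πe, where N(u(t)) = exp((2/n) H(u(t))). -/

import Mathlib

open Real MeasureTheory Filter

/-- The heat semigroup solution on `ℝⁿ` with initial datum `f`. -/
noncomputable def heatSol (n : ℕ) (f : EuclideanSpace ℝ (Fin n) → ℝ)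
    (t : ℝ) (x : EuclideanSpace ℝ (Fin n)) : ℝ :=
  ∫ y, (4 * π * t) ^ (-(n : ℝ) / 2) * Real.exp (-‖x - y‖ ^ 2 / (4 * t)) * f y

/-- The Boltzmann–Shannon entropy of the heat solution at time `t`. -/
noncomputable def shannonEntropy (n : ℕ) (f : EuclideanSpace ℝ (Fin n) → ℝ) (t : ℝ) : ℝ :=
  -∫ x, heatSol n f t x * Real.log (heatSol n f t x)

/-- The Shannon entropy power of the heat solution at time `t`. -/
noncomputable def entropyPower (n : ℕ) (f : EuclideanSpace ℝ (Fin n) → ℝ) (t : ℝ) : ℝ :=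
  Real.exp ((2 / (n : ℝ)) * shannonEntropy n f t)

/-!
Write `u(t) = G_t ∗ μ` for the heat evolution of a probability measure `μ` on a `d`-dimensional
space, `G_t` being the heat kernel. The entropy of `G_t` is exactly `(d/2) log (4πet)`. Averaging
over translates does not decrease entropy (Jensen's inequality for the concave function
`s ↦ -s log s`), so `H(u(t)) ≥ H(G_t)`. Conversely, Gibbs' inequality bounds `H(u(t))` by the
cross entropy of `u(t)` relative to `G_t`, which involves only the mass and the second moment of
`u(t)`. Together,
`0 ≤ H(u(t)) - (d/2) log (4πet) ≤ (∫ ‖y‖² dμ) / (4t)`,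
and the right-hand side tends to `0`.
-/

section Entropy

variable {α : Type*} [MeasurableSpace α]

/-- The differential entropy `-∫ g log g dν` of a density `g` with respect to a reference measure
`ν`. It has the junk value `0` when `g log g` is not integrable. -/
noncomputable def differentialEntropy (g : α → ℝ) (ν : Measure α) : ℝ :=
  ∫ x, negMulLog (g x) ∂ν

lemma negMulLog_le_sub_mul_log {a b : ℝ} (ha : 0 ≤ a) (hb : 0 < b) :
    negMulLog a ≤ b - a - a * log b := by
  have h := mul_le_mul_of_nonneg_left (negMulLog_le_one_sub_self (div_nonneg ha hb.le)) hb.le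
  have hmul := negMulLog_mul b (a / b)
  rw [mul_div_cancel₀ a hb.ne'] at hmul
  have hlog : a / b * negMulLog b = -(a * log b) := by
    rw [negMulLog]; field_simp
  have hsub : b * (1 - a / b) = b - a := by field_simp
  linarith

lemma differentialEntropy_le_neg_integral_mul_log {ν : Measure α} {u p : α → ℝ}
    (hu_nonneg : ∀ x, 0 ≤ u x) (hp_pos : ∀ x, 0 < p x)
    (hu : Integrable u ν) (hp : Integrable p ν) (hup : Integrable (fun x => u x * log (p x)) ν)
    (hu_log : Integrable (fun x => negMulLog (u x)) ν) (hmass : ∫ x, u x ∂ν = ∫ x, p x ∂ν) :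
    differentialEntropy u ν ≤ -∫ x, u x * log (p x) ∂ν := by
  calc differentialEntropy u ν
      ≤ ∫ x, (p x - u x - u x * log (p x)) ∂ν :=
        integral_mono hu_log ((hp.sub hu).sub hup)
          fun x => negMulLog_le_sub_mul_log (hu_nonneg x) (hp_pos x)
    _ = -∫ x, u x * log (p x) ∂ν := by
        rw [integral_sub (f := fun x => p x - u x) (hp.sub hu) hup, integral_sub hp hu, hmass,
          sub_self, zero_sub]

end Entropy

section Convolution

variable {G : Type*} [AddGroup G] [MeasurableSpace G]

/-- The density `x ↦ ∫ g (x - y) dμ(y)` of the convolution with `μ` of the measure of density `g`,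
i.e. the `μ`-average of the translates of `g`. -/
noncomputable def convDensity (g : G → ℝ) (μ : Measure G) (x : G) : ℝ :=
  ∫ y, g (x - y) ∂μ

lemma convDensity_nonneg {g : G → ℝ} (hg : ∀ x, 0 ≤ g x) (μ : Measure G) (x : G) :
    0 ≤ convDensity g μ x :=
  integral_nonneg fun _ => hg _

variable [MeasurableAdd₂ G] [MeasurableNeg G] {ν μ : Measure G} [SFinite ν]
  [ν.IsAddRightInvariant] {g : G → ℝ}

lemma integrable_comp_sub_prod [IsFiniteMeasure μ] (hg : Integrable g ν) :
    Integrable (fun q : G × G => g (q.1 - q.2)) (ν.prod μ) :=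
  (measurePreserving_sub_prod ν μ).integrable_comp_of_integrable (hg.comp_fst μ)

lemma integrable_convDensity [IsFiniteMeasure μ] (hg : Integrable g ν) :
    Integrable (convDensity g μ) ν :=
  (integrable_comp_sub_prod hg).integral_prod_left

variable [IsProbabilityMeasure μ]

lemma integral_convDensity (hg : Integrable g ν) :
    ∫ x, convDensity g μ x ∂ν = ∫ x, g x ∂ν := by
  unfold convDensity
  rw [integral_integral_swap (integrable_comp_sub_prod hg)]
  simp only [integral_sub_right_eq_self g, integral_const, probReal_univ, one_smul]

lemma convDensity_negMulLog_le (hg_nonneg : ∀ x, 0 ≤ g x) (hg : Integrable g ν)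
    (hg_log : Integrable (fun x => negMulLog (g x)) ν) :
    ∀ᵐ x ∂ν, convDensity (fun z => negMulLog (g z)) μ x ≤ negMulLog (convDensity g μ x) := by
  filter_upwards [(integrable_comp_sub_prod (μ := μ) hg).prod_right_ae,
    (integrable_comp_sub_prod (μ := μ) hg_log).prod_right_ae] with x hx hx_log
  exact concaveOn_negMulLog.le_map_integral continuous_negMulLog.continuousOn isClosed_Ici
    (Eventually.of_forall fun y => hg_nonneg (x - y)) hx hx_log

lemma integrable_negMulLog_convDensity (hg_nonneg : ∀ x, 0 ≤ g x) (hg : Integrable g ν)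
    (hg_log : Integrable (fun x => negMulLog (g x)) ν) {p : G → ℝ} (hp_pos : ∀ x, 0 < p x)
    (hp : Integrable p ν) (hgp : Integrable (fun x => convDensity g μ x * log (p x)) ν) :
    Integrable (fun x => negMulLog (convDensity g μ x)) ν := by
  have hconv : Integrable (convDensity g μ) ν := integrable_convDensity hg
  refine integrable_of_le_of_le
    (continuous_negMulLog.comp_aestronglyMeasurable hconv.aestronglyMeasurable)
    (convDensity_negMulLog_le hg_nonneg hg hg_log) ?_
    (integrable_convDensity hg_log) ((hp.sub hconv).sub hgp)
  exact Eventually.of_forall fun x =>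
    negMulLog_le_sub_mul_log (convDensity_nonneg hg_nonneg μ x) (hp_pos x)

lemma differentialEntropy_le_convDensity (hg_nonneg : ∀ x, 0 ≤ g x) (hg : Integrable g ν)
    (hg_log : Integrable (fun x => negMulLog (g x)) ν)
    (hconv_log : Integrable (fun x => negMulLog (convDensity g μ x)) ν) :
    differentialEntropy g ν ≤ differentialEntropy (convDensity g μ) ν := by
  calc differentialEntropy g ν
      = ∫ x, convDensity (fun z => negMulLog (g z)) μ x ∂ν := (integral_convDensity hg_log).symm
    _ ≤ differentialEntropy (convDensity g μ) ν :=
        integral_mono_ae (integrable_convDensity hg_log) hconv_log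
          (convDensity_negMulLog_le hg_nonneg hg hg_log)

end Convolution

section SecondMoment

variable {E : Type*} [NormedAddCommGroup E] [MeasurableSpace E] {ν : Measure E} {k : E → ℝ}

lemma integrable_sq_norm_add_mul [OpensMeasurableSpace E] (hk : Integrable k ν)
    (hk_sq : Integrable (fun z => ‖z‖ ^ 2 * k z) ν) (y : E) :
    Integrable (fun z => ‖z + y‖ ^ 2 * k z) ν := by
  refine ((hk_sq.norm.const_mul 2).add (hk.norm.const_mul (2 * ‖y‖ ^ 2))).mono'
    (Continuous.aestronglyMeasurable (by fun_prop) |>.mul hk.aestronglyMeasurable)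
    (Eventually.of_forall fun z => ?_)
  calc ‖‖z + y‖ ^ 2 * k z‖ = ‖z + y‖ ^ 2 * ‖k z‖ := by simp
    _ ≤ (2 * ‖z‖ ^ 2 + 2 * ‖y‖ ^ 2) * ‖k z‖ := by
        grw [norm_add_le z y, add_sq_le, mul_add]
    _ = 2 * ‖‖z‖ ^ 2 * k z‖ + 2 * ‖y‖ ^ 2 * ‖k z‖ := by
        simp only [norm_mul, norm_pow, norm_norm]; ring

lemma integral_sq_norm_add_mul_of_even [InnerProductSpace ℝ E] [BorelSpace E] [ν.IsNegInvariant]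
    (hk_even : k.Even) (hk : Integrable k ν)
    (hk_sq : Integrable (fun z => ‖z‖ ^ 2 * k z) ν) (y : E) :
    ∫ z, ‖z + y‖ ^ 2 * k z ∂ν = ∫ z, ‖z‖ ^ 2 * k z ∂ν + ‖y‖ ^ 2 * ∫ z, k z ∂ν := by
  have hreflect : ∫ z, ‖z + y‖ ^ 2 * k z ∂ν = ∫ z, ‖z - y‖ ^ 2 * k z ∂ν := by
    rw [← integral_neg_eq_self]
    refine integral_congr_ae (Eventually.of_forall fun z => ?_)
    simp only [hk_even z, neg_add_eq_sub, norm_sub_rev y z]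
  have hsub : Integrable (fun z => ‖z - y‖ ^ 2 * k z) ν := by
    simpa only [sub_eq_add_neg] using integrable_sq_norm_add_mul hk hk_sq (-y)
  have hsum : ∫ z, ‖z + y‖ ^ 2 * k z ∂ν + ∫ z, ‖z - y‖ ^ 2 * k z ∂ν =
      2 * (∫ z, ‖z‖ ^ 2 * k z ∂ν + ‖y‖ ^ 2 * ∫ z, k z ∂ν) := by
    rw [← integral_add (integrable_sq_norm_add_mul hk hk_sq y) hsub, ← integral_const_mul (‖y‖ ^ 2),
      ← integral_add hk_sq (hk.const_mul _), ← integral_const_mul]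
    congr 1 with z
    linear_combination k z * parallelogram_law_with_norm ℝ z y
  linarith

end SecondMoment

section Gaussian

variable {E : Type*} [NormedAddCommGroup E] [InnerProductSpace ℝ E] [FiniteDimensional ℝ E]
  [MeasurableSpace E] [BorelSpace E] {b : ℝ}

open Module (finrank)

lemma integrable_exp_neg_mul_sq_norm (hb : 0 < b) :
    Integrable (fun z : E => Real.exp (-b * ‖z‖ ^ 2)) := by
  refine Integrable.of_integral_ne_zero ?_
  rw [GaussianFourier.integral_rexp_neg_mul_sq_norm hb]
  positivity

lemma integrable_sq_norm_mul_exp_neg_mul_sq_norm (hb : 0 < b) :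
    Integrable (fun z : E => ‖z‖ ^ 2 * Real.exp (-b * ‖z‖ ^ 2)) := by
  refine ((integrable_exp_neg_mul_sq_norm (E := E) (half_pos hb)).const_mul (2 / b)).mono'
    (Continuous.aestronglyMeasurable (by fun_prop)) (Eventually.of_forall fun z => ?_)
  have hexp : b / 2 * ‖z‖ ^ 2 ≤ Real.exp (b / 2 * ‖z‖ ^ 2) := by
    linarith [Real.add_one_le_exp (b / 2 * ‖z‖ ^ 2)]
  calc ‖‖z‖ ^ 2 * Real.exp (-b * ‖z‖ ^ 2)‖
      = 2 / b * (b / 2 * ‖z‖ ^ 2 * Real.exp (-b * ‖z‖ ^ 2)) := by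
        rw [Real.norm_of_nonneg (by positivity)]; field_simp
    _ ≤ 2 / b * (Real.exp (b / 2 * ‖z‖ ^ 2) * Real.exp (-b * ‖z‖ ^ 2)) := by gcongr
    _ = 2 / b * Real.exp (-(b / 2) * ‖z‖ ^ 2) := by
        rw [← Real.exp_add]; ring_nf

lemma integral_Ioi_pow_mul_exp_neg_mul_sq (hb : 0 < b) (k : ℕ) :
    ∫ r in Set.Ioi (0 : ℝ), r ^ k * Real.exp (-b * r ^ 2) =
      b ^ (-((k : ℝ) + 1) / 2) * (1 / 2) * Real.Gamma (((k : ℝ) + 1) / 2) := by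
  simpa only [rpow_natCast, rpow_two] using
    integral_rpow_mul_exp_neg_mul_rpow two_pos (by linarith [k.cast_nonneg (α := ℝ)] : -1 < (k : ℝ))
      hb

lemma integral_Ioi_pow_add_two_mul_exp_neg_mul_sq (hb : 0 < b) (k : ℕ) :
    ∫ r in Set.Ioi (0 : ℝ), r ^ (k + 2) * Real.exp (-b * r ^ 2) =
      (k + 1) / (2 * b) * ∫ r in Set.Ioi (0 : ℝ), r ^ k * Real.exp (-b * r ^ 2) := by
  rw [integral_Ioi_pow_mul_exp_neg_mul_sq hb, integral_Ioi_pow_mul_exp_neg_mul_sq hb]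
  have hpow : -(((k + 2 : ℕ) : ℝ) + 1) / 2 = -((k : ℝ) + 1) / 2 - 1 := by push_cast; ring
  have hGamma : (((k + 2 : ℕ) : ℝ) + 1) / 2 = ((k : ℝ) + 1) / 2 + 1 := by push_cast; ring
  rw [hpow, hGamma, Real.rpow_sub_one hb.ne', Real.Gamma_add_one (by positivity)]
  field_simp

lemma integral_sq_norm_mul_exp_neg_mul_sq_norm (hb : 0 < b) :
    ∫ z : E, ‖z‖ ^ 2 * Real.exp (-b * ‖z‖ ^ 2) =
      finrank ℝ E / (2 * b) * ∫ z : E, Real.exp (-b * ‖z‖ ^ 2) := by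
  rcases subsingleton_or_nontrivial E with _ | _
  · simp [Subsingleton.elim _ (0 : E), Module.finrank_zero_of_subsingleton]
  obtain ⟨k, hk⟩ := Nat.exists_eq_succ_of_ne_zero (Module.finrank_pos (R := ℝ) (M := E)).ne'
  rw [integral_fun_norm_addHaar volume (fun r => r ^ 2 * Real.exp (-b * r ^ 2)),
    integral_fun_norm_addHaar volume (fun r => Real.exp (-b * r ^ 2))]
  simp only [hk, Nat.succ_eq_add_one, Nat.add_sub_cancel, smul_eq_mul, nsmul_eq_mul, ← mul_assoc,
    ← pow_add, integral_Ioi_pow_add_two_mul_exp_neg_mul_sq hb]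
  push_cast
  ring

end Gaussian

section HeatKernel

variable {E : Type*} [NormedAddCommGroup E] [InnerProductSpace ℝ E] {t : ℝ}

open Module (finrank)

/-- The Gaussian heat kernel of `∂ₜ - Δ` at time `t` on the Euclidean space `E`. -/
noncomputable def heatKernel (t : ℝ) (x : E) : ℝ :=
  (4 * π * t) ^ (-(finrank ℝ E : ℝ) / 2) * Real.exp (-‖x‖ ^ 2 / (4 * t))

lemma heatKernel_eq_mul_exp_neg_mul (t : ℝ) (x : E) :
    heatKernel t x =
      (4 * π * t) ^ (-(finrank ℝ E : ℝ) / 2) * Real.exp (-(4 * t)⁻¹ * ‖x‖ ^ 2) := by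
  rw [heatKernel]; ring_nf

lemma heatKernel_pos (ht : 0 < t) (x : E) : 0 < heatKernel t x := by
  unfold heatKernel; positivity

lemma heatKernel_even (t : ℝ) : (heatKernel t : E → ℝ).Even := fun x => by
  simp only [heatKernel, norm_neg]

lemma continuous_heatKernel (t : ℝ) : Continuous (heatKernel t : E → ℝ) := by
  unfold heatKernel; fun_prop

lemma log_heatKernel (ht : 0 < t) (x : E) :
    log (heatKernel t x) =
      -((finrank ℝ E : ℝ) / 2 * log (4 * π * t)) - (4 * t)⁻¹ * ‖x‖ ^ 2 := by
  rw [heatKernel_eq_mul_exp_neg_mul, log_mul (by positivity) (Real.exp_pos _).ne', Real.log_exp,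
    log_rpow (by positivity)]
  ring

lemma mul_log_heatKernel (ht : 0 < t) (a : ℝ) (x : E) :
    a * log (heatKernel t x) =
      -((finrank ℝ E : ℝ) / 2 * log (4 * π * t)) * a - (4 * t)⁻¹ * (‖x‖ ^ 2 * a) := by
  rw [log_heatKernel ht]; ring

variable [MeasurableSpace E]

lemma integrable_mul_log_heatKernel {ν : Measure E} (ht : 0 < t) {u : E → ℝ} (hu : Integrable u ν)
    (hu_sq : Integrable (fun x => ‖x‖ ^ 2 * u x) ν) :
    Integrable (fun x => u x * log (heatKernel t x)) ν := by
  simp only [mul_log_heatKernel ht]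
  exact (hu.const_mul _).sub (hu_sq.const_mul _)

lemma integral_mul_log_heatKernel {ν : Measure E} (ht : 0 < t) {u : E → ℝ} (hu : Integrable u ν)
    (hu_sq : Integrable (fun x => ‖x‖ ^ 2 * u x) ν) :
    ∫ x, u x * log (heatKernel t x) ∂ν =
      -((finrank ℝ E : ℝ) / 2 * log (4 * π * t)) * ∫ x, u x ∂ν
        - (4 * t)⁻¹ * ∫ x, ‖x‖ ^ 2 * u x ∂ν := by
  simp only [mul_log_heatKernel ht]
  rw [integral_sub (hu.const_mul _) (hu_sq.const_mul _), integral_const_mul, integral_const_mul]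

variable [FiniteDimensional ℝ E] [BorelSpace E]

lemma integrable_heatKernel (ht : 0 < t) : Integrable (heatKernel t : E → ℝ) := by
  simpa only [← heatKernel_eq_mul_exp_neg_mul] using
    (integrable_exp_neg_mul_sq_norm (E := E) (by positivity : 0 < (4 * t)⁻¹)).const_mul
      ((4 * π * t) ^ (-(finrank ℝ E : ℝ) / 2))

lemma integral_heatKernel (ht : 0 < t) : ∫ x : E, heatKernel t x = 1 := by
  have hbase : π / (4 * t)⁻¹ = 4 * π * t := by rw [div_inv_eq_mul]; ring
  simp only [heatKernel_eq_mul_exp_neg_mul]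
  rw [integral_const_mul, GaussianFourier.integral_rexp_neg_mul_sq_norm (by positivity), hbase,
    ← rpow_add (by positivity), neg_div, neg_add_cancel, rpow_zero]

lemma integrable_sq_norm_mul_heatKernel (ht : 0 < t) :
    Integrable (fun x : E => ‖x‖ ^ 2 * heatKernel t x) := by
  simpa only [heatKernel_eq_mul_exp_neg_mul, mul_left_comm] using
    (integrable_sq_norm_mul_exp_neg_mul_sq_norm (E := E) (by positivity : 0 < (4 * t)⁻¹)).const_mul
      ((4 * π * t) ^ (-(finrank ℝ E : ℝ) / 2))

lemma integral_sq_norm_mul_heatKernel (ht : 0 < t) :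
    ∫ x : E, ‖x‖ ^ 2 * heatKernel t x = 2 * finrank ℝ E * t := by
  calc ∫ x : E, ‖x‖ ^ 2 * heatKernel t x
      = finrank ℝ E / (2 * (4 * t)⁻¹) * ∫ x : E, heatKernel t x := by
        simp only [heatKernel_eq_mul_exp_neg_mul, mul_left_comm (‖_‖ ^ 2)]
        rw [integral_const_mul, integral_const_mul,
          integral_sq_norm_mul_exp_neg_mul_sq_norm (by positivity), mul_left_comm]
    _ = 2 * finrank ℝ E * t := by
        rw [integral_heatKernel ht]; field_simp; ring

lemma log_four_pi_exp_one_mul (ht : 0 < t) :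
    log (4 * π * Real.exp 1 * t) = log (4 * π * t) + 1 := by
  rw [mul_right_comm, log_mul (by positivity) (Real.exp_pos 1).ne', Real.log_exp]

lemma integrable_negMulLog_heatKernel (ht : 0 < t) :
    Integrable (fun x : E => negMulLog (heatKernel t x)) := by
  simpa only [negMulLog, neg_mul, Pi.neg_def] using
    (integrable_mul_log_heatKernel (E := E) ht (integrable_heatKernel ht)
      (integrable_sq_norm_mul_heatKernel ht)).neg

lemma differentialEntropy_heatKernel (ht : 0 < t) :
    differentialEntropy (heatKernel t : E → ℝ) volume =
      (finrank ℝ E : ℝ) / 2 * log (4 * π * Real.exp 1 * t) := by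
  simp only [differentialEntropy, negMulLog, neg_mul]
  rw [integral_neg, integral_mul_log_heatKernel ht (integrable_heatKernel ht)
    (integrable_sq_norm_mul_heatKernel ht), integral_heatKernel ht,
    integral_sq_norm_mul_heatKernel ht, log_four_pi_exp_one_mul ht]
  field_simp
  ring

end HeatKernel

section HeatEvolution

variable {E : Type*} [NormedAddCommGroup E] [InnerProductSpace ℝ E] [MeasurableSpace E]
  {μ : Measure E} {t : ℝ}

open Module (finrank)

/-- The density at time `t` of the heat flow on `E` started at the measure `μ`. -/
noncomputable def heatEvolution (μ : Measure E) (t : ℝ) : E → ℝ :=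
  convDensity (heatKernel t) μ

lemma heatEvolution_nonneg (ht : 0 < t) (x : E) : 0 ≤ heatEvolution μ t x :=
  convDensity_nonneg (fun z => (heatKernel_pos ht z).le) μ x

variable [FiniteDimensional ℝ E] [BorelSpace E]

lemma integrable_sq_norm_mul_heatKernel_sub (ht : 0 < t) (y : E) :
    Integrable (fun x : E => ‖x‖ ^ 2 * heatKernel t (x - y)) := by
  simpa only [sub_add_cancel] using (integrable_sq_norm_add_mul (integrable_heatKernel ht)
    (integrable_sq_norm_mul_heatKernel ht) y).comp_sub_right y

lemma integral_sq_norm_mul_heatKernel_sub (ht : 0 < t) (y : E) :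
    ∫ x : E, ‖x‖ ^ 2 * heatKernel t (x - y) = ‖y‖ ^ 2 + 2 * finrank ℝ E * t := by
  rw [← integral_add_right_eq_self _ y]
  simp only [add_sub_cancel_right]
  rw [integral_sq_norm_add_mul_of_even (heatKernel_even t) (integrable_heatKernel ht)
    (integrable_sq_norm_mul_heatKernel ht), integral_heatKernel ht,
    integral_sq_norm_mul_heatKernel ht, mul_one, add_comm]

lemma integrable_heatEvolution [IsFiniteMeasure μ] (ht : 0 < t) :
    Integrable (heatEvolution μ t) :=
  integrable_convDensity (integrable_heatKernel ht)

lemma integrable_sq_norm_mul_heatKernel_sub_prod [IsFiniteMeasure μ] (ht : 0 < t)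
    (hμ : Integrable (fun y => ‖y‖ ^ 2) μ) :
    Integrable (fun q : E × E => ‖q.1‖ ^ 2 * heatKernel t (q.1 - q.2)) (volume.prod μ) := by
  have hcont : Continuous (fun q : E × E => ‖q.1‖ ^ 2 * heatKernel t (q.1 - q.2)) :=
    (by fun_prop : Continuous fun q : E × E => ‖q.1‖ ^ 2).mul
      ((continuous_heatKernel t).comp (continuous_fst.sub continuous_snd))
  refine (integrable_prod_iff' hcont.aestronglyMeasurable).2
    ⟨Eventually.of_forall (integrable_sq_norm_mul_heatKernel_sub ht), ?_⟩
  have hnorm (x y : E) :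
      ‖‖x‖ ^ 2 * heatKernel t (x - y)‖ = ‖x‖ ^ 2 * heatKernel t (x - y) :=
    Real.norm_of_nonneg (mul_nonneg (sq_nonneg _) (heatKernel_pos ht _).le)
  simp only [hnorm, integral_sq_norm_mul_heatKernel_sub ht]
  exact hμ.add (integrable_const _)

lemma integrable_sq_norm_mul_heatEvolution [IsFiniteMeasure μ] (ht : 0 < t)
    (hμ : Integrable (fun y => ‖y‖ ^ 2) μ) :
    Integrable (fun x => ‖x‖ ^ 2 * heatEvolution μ t x) := by
  simpa only [heatEvolution, convDensity, integral_const_mul] using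
    (integrable_sq_norm_mul_heatKernel_sub_prod ht hμ).integral_prod_left

lemma integrable_heatEvolution_mul_log_heatKernel [IsFiniteMeasure μ] (ht : 0 < t)
    (hμ : Integrable (fun y => ‖y‖ ^ 2) μ) :
    Integrable (fun x => heatEvolution μ t x * log (heatKernel t x)) :=
  integrable_mul_log_heatKernel ht (integrable_heatEvolution ht)
    (integrable_sq_norm_mul_heatEvolution ht hμ)

variable [IsProbabilityMeasure μ]

lemma integral_heatEvolution (ht : 0 < t) : ∫ x, heatEvolution μ t x = 1 :=
  (integral_convDensity (integrable_heatKernel ht)).trans (integral_heatKernel ht)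

lemma integral_sq_norm_mul_heatEvolution (ht : 0 < t) (hμ : Integrable (fun y => ‖y‖ ^ 2) μ) :
    ∫ x, ‖x‖ ^ 2 * heatEvolution μ t x = ∫ y, ‖y‖ ^ 2 ∂μ + 2 * finrank ℝ E * t := by
  calc ∫ x, ‖x‖ ^ 2 * heatEvolution μ t x
      = ∫ x, ∫ y, ‖x‖ ^ 2 * heatKernel t (x - y) ∂μ := by
        simp only [heatEvolution, convDensity, integral_const_mul]
    _ = ∫ y, (‖y‖ ^ 2 + 2 * finrank ℝ E * t) ∂μ := by
        rw [integral_integral_swap (integrable_sq_norm_mul_heatKernel_sub_prod ht hμ)]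
        simp only [integral_sq_norm_mul_heatKernel_sub ht]
    _ = ∫ y, ‖y‖ ^ 2 ∂μ + 2 * finrank ℝ E * t := by
        rw [integral_add hμ (integrable_const _), integral_const, probReal_univ, one_smul]

lemma integrable_negMulLog_heatEvolution (ht : 0 < t) (hμ : Integrable (fun y => ‖y‖ ^ 2) μ) :
    Integrable (fun x => negMulLog (heatEvolution μ t x)) :=
  integrable_negMulLog_convDensity (fun z => (heatKernel_pos ht z).le) (integrable_heatKernel ht)
    (integrable_negMulLog_heatKernel ht) (heatKernel_pos ht) (integrable_heatKernel ht)
    (integrable_heatEvolution_mul_log_heatKernel ht hμ)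

theorem le_differentialEntropy_heatEvolution (ht : 0 < t)
    (hμ : Integrable (fun y => ‖y‖ ^ 2) μ) :
    (finrank ℝ E : ℝ) / 2 * log (4 * π * Real.exp 1 * t) ≤
      differentialEntropy (heatEvolution μ t) volume :=
  (differentialEntropy_heatKernel ht).symm.trans_le <|
    differentialEntropy_le_convDensity (fun z => (heatKernel_pos ht z).le)
      (integrable_heatKernel ht) (integrable_negMulLog_heatKernel ht)
      (integrable_negMulLog_heatEvolution ht hμ)

theorem differentialEntropy_heatEvolution_le (ht : 0 < t)
    (hμ : Integrable (fun y => ‖y‖ ^ 2) μ) :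
    differentialEntropy (heatEvolution μ t) volume ≤
      (finrank ℝ E : ℝ) / 2 * log (4 * π * Real.exp 1 * t) + (4 * t)⁻¹ * ∫ y, ‖y‖ ^ 2 ∂μ := by
  have hmass : ∫ x, heatEvolution μ t x = ∫ x : E, heatKernel t x := by
    rw [integral_heatEvolution ht, integral_heatKernel ht]
  calc differentialEntropy (heatEvolution μ t) volume
      ≤ -∫ x, heatEvolution μ t x * log (heatKernel t x) :=
        differentialEntropy_le_neg_integral_mul_log (heatEvolution_nonneg ht) (heatKernel_pos ht)
          (integrable_heatEvolution ht) (integrable_heatKernel ht)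
          (integrable_heatEvolution_mul_log_heatKernel ht hμ)
          (integrable_negMulLog_heatEvolution ht hμ) hmass
    _ = (finrank ℝ E : ℝ) / 2 * log (4 * π * t)
          + (4 * t)⁻¹ * (∫ y, ‖y‖ ^ 2 ∂μ + 2 * finrank ℝ E * t) := by
        rw [integral_mul_log_heatKernel ht (integrable_heatEvolution ht)
          (integrable_sq_norm_mul_heatEvolution ht hμ), integral_heatEvolution ht,
          integral_sq_norm_mul_heatEvolution ht hμ]
        ring
    _ = (finrank ℝ E : ℝ) / 2 * log (4 * π * Real.exp 1 * t) + (4 * t)⁻¹ * ∫ y, ‖y‖ ^ 2 ∂μ := by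
        rw [log_four_pi_exp_one_mul ht]
        field_simp
        ring

theorem tendsto_renormalized_differentialEntropy (hμ : Integrable (fun y => ‖y‖ ^ 2) μ) :
    Tendsto (fun t => differentialEntropy (heatEvolution μ t) volume
      - (finrank ℝ E : ℝ) / 2 * log (4 * π * Real.exp 1 * t)) atTop (nhds 0) := by
  have hbound : Tendsto (fun t : ℝ => (4 * t)⁻¹ * ∫ y, ‖y‖ ^ 2 ∂μ) atTop (nhds 0) := by
    simpa only [zero_mul, Function.comp_def, id] using
      (tendsto_inv_atTop_zero.comp (tendsto_id.const_mul_atTop four_pos)).mul_const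
        (∫ y, ‖y‖ ^ 2 ∂μ)
  refine tendsto_of_tendsto_of_tendsto_of_le_of_le' tendsto_const_nhds hbound ?_ ?_
  · filter_upwards [eventually_gt_atTop 0] with t ht
    exact sub_nonneg.2 (le_differentialEntropy_heatEvolution ht hμ)
  · filter_upwards [eventually_gt_atTop 0] with t ht
    exact sub_le_iff_le_add'.2 (differentialEntropy_heatEvolution_le ht hμ)

lemma tendsto_exp_mul_div_of_tendsto_sub_log {h : ℝ → ℝ} {d c : ℝ} (hd : d ≠ 0) (hc : 0 < c)
    (hh : Tendsto (fun t => h t - d / 2 * log (c * t)) atTop (nhds 0)) :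
    Tendsto (fun t => Real.exp (2 / d * h t) / t) atTop (nhds c) := by
  have hexp : Tendsto (fun t => Real.exp (2 / d * (h t - d / 2 * log (c * t))) * c)
      atTop (nhds c) := by
    simpa only [mul_zero, Real.exp_zero, one_mul] using (hh.const_mul (2 / d)).rexp.mul_const c
  refine hexp.congr' ?_
  filter_upwards [eventually_gt_atTop 0] with t ht
  have hexponent : 2 / d * (h t - d / 2 * log (c * t)) = 2 / d * h t - log (c * t) := by
    field_simp
  rw [hexponent, Real.exp_sub, Real.exp_log (by positivity)]
  field_simp

theorem renormalized_entropy_limit_general [Nontrivial E]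
    (hμ : Integrable (fun y => ‖y‖ ^ 2) μ) :
    Tendsto (fun t => differentialEntropy (heatEvolution μ t) volume
      - (finrank ℝ E : ℝ) / 2 * log (4 * π * Real.exp 1 * t)) atTop (nhds 0) ∧
    Tendsto (fun t => Real.exp (2 / (finrank ℝ E : ℝ) *
      differentialEntropy (heatEvolution μ t) volume) / t) atTop (nhds (4 * π * Real.exp 1)) :=
  ⟨tendsto_renormalized_differentialEntropy hμ,
    tendsto_exp_mul_div_of_tendsto_sub_log (Nat.cast_ne_zero.2 Module.finrank_pos.ne')
      (by positivity) (tendsto_renormalized_differentialEntropy hμ)⟩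

end HeatEvolution

section Density

lemma isProbabilityMeasure_withDensity_ofReal {α : Type*} [MeasurableSpace α] {ν : Measure α}
    {f : α → ℝ} (hf_nonneg : ∀ x, 0 ≤ f x) (hf_int : ∫ x, f x ∂ν = 1) :
    IsProbabilityMeasure (ν.withDensity fun x => ENNReal.ofReal (f x)) := by
  have hf : Integrable f ν := .of_integral_ne_zero (by rw [hf_int]; exact one_ne_zero)
  refine ⟨?_⟩
  rw [withDensity_apply _ MeasurableSet.univ, setLIntegral_univ,
    ← ofReal_integral_eq_lintegral_ofReal hf (Eventually.of_forall hf_nonneg), hf_int,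
    ENNReal.ofReal_one]

lemma integrable_withDensity_ofReal_of_hasCompactSupport {X : Type*} [TopologicalSpace X]
    [MeasurableSpace X] [OpensMeasurableSpace X] {ν : Measure X} [IsFiniteMeasureOnCompacts ν]
    {f g : X → ℝ} (hf_cont : Continuous f) (hf_nonneg : ∀ x, 0 ≤ f x)
    (hf_supp : HasCompactSupport f) (hg : Continuous g) :
    Integrable g (ν.withDensity fun x => ENNReal.ofReal (f x)) := by
  rw [integrable_withDensity_iff_integrable_smul' hf_cont.measurable.ennreal_ofReal
    (Eventually.of_forall fun _ => ENNReal.ofReal_lt_top)]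
  simp only [ENNReal.toReal_ofReal (hf_nonneg _)]
  exact (hf_cont.smul hg).integrable_of_hasCompactSupport hf_supp.smul_right

variable {n : ℕ} {f : EuclideanSpace ℝ (Fin n) → ℝ}

lemma heatSol_eq_heatEvolution (hf : AEMeasurable f) (hf_nonneg : ∀ x, 0 ≤ f x) (t : ℝ) :
    heatSol n f t = heatEvolution (volume.withDensity fun y => ENNReal.ofReal (f y)) t := by
  ext x
  rw [heatSol, heatEvolution, convDensity, integral_withDensity_eq_integral_toReal_smul₀
    hf.ennreal_ofReal (Eventually.of_forall fun _ => ENNReal.ofReal_lt_top)]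
  simp only [ENNReal.toReal_ofReal (hf_nonneg _), heatKernel, finrank_euclideanSpace_fin,
    smul_eq_mul, mul_comm (f _)]

lemma shannonEntropy_eq_differentialEntropy (hf : AEMeasurable f) (hf_nonneg : ∀ x, 0 ≤ f x)
    (t : ℝ) :
    shannonEntropy n f t = differentialEntropy
      (heatEvolution (volume.withDensity fun y => ENNReal.ofReal (f y)) t) volume := by
  simp only [shannonEntropy, heatSol_eq_heatEvolution hf hf_nonneg, differentialEntropy, negMulLog,
    neg_mul, integral_neg]

end Density

/-- Ni's asymptotics in the Euclidean case: the renormalized entropy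
`H(u(t)) - (n/2)log(4πe t)` tends to `0` as `t → ∞`; equivalently `N(u(t))/t → 4πe`. -/
theorem renormalized_entropy_limit (n : ℕ) (hn : 1 ≤ n)
    (f : EuclideanSpace ℝ (Fin n) → ℝ)
    (hf_cont : Continuous f) (hf_nonneg : ∀ x, 0 ≤ f x)
    (hf_supp : HasCompactSupport f)
    (hf_int : ∫ x, f x = 1) :
    Filter.Tendsto (fun t => shannonEntropy n f t
        - ((n : ℝ) / 2) * Real.log (4 * π * Real.exp 1 * t)) Filter.atTop (nhds 0) ∧
    Filter.Tendsto (fun t => entropyPower n f t / t) Filter.atTop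
      (nhds (4 * π * Real.exp 1)) := by
  have : NeZero n := ⟨by omega⟩
  have := isProbabilityMeasure_withDensity_ofReal hf_nonneg hf_int
  have hsecond_moment : Integrable (fun y => ‖y‖ ^ 2)
      (volume.withDensity fun y => ENNReal.ofReal (f y)) :=
    integrable_withDensity_ofReal_of_hasCompactSupport hf_cont hf_nonneg hf_supp (by fun_prop)
  simpa only [entropyPower,
    shannonEntropy_eq_differentialEntropy hf_cont.measurable.aemeasurable hf_nonneg,
    finrank_euclideanSpace_fin] using renormalized_entropy_limit_general hsecond_moment
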